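/- Equip ℬ ⊗ ℬ with the product (x ⊗ y) ⋆ (x' ⊗ y') = (x ⋆ x') ⊗ (y ⋆ y'). Then Δ is a morphism of algebras: Δ(u ⋆ v) = Δ(u) ⋆ Δ(v) for all u, v ∈ ℬ, and ε*(u ⋆ v) = ε*(u)·ε*(v). -/

import Mathlib

open scoped BigOperators

structure BD where
  lam : List ℕ
  up : Finset ℕ
  dn : Finset ℕ
  ed : Finset (ℕ × ℕ)
deriving DecidableEq

namespace BD

/-- number of vertices -/
def nv (G : BD) : ℕ := G.lam.length

/-- number of half-edges -/
def omega (G : BD) : ℕ := G.lam.sum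

/-- the vertex to which a half-edge belongs -/
def v (G : BD) (k : ℕ) : ℕ :=
  (List.range G.lam.length).countP (fun i => (G.lam.take i).sum < k)

def Valid (G : BD) : Prop :=
  (∀ x ∈ G.lam, 0 < x) ∧
  G.up ⊆ Finset.Icc 1 G.omega ∧
  G.dn ⊆ Finset.Icc 1 G.omega ∧
  (∀ p ∈ G.ed, p.1 ∈ G.up ∧ p.2 ∈ G.dn ∧ G.v p.1 < G.v p.2) ∧
  (∀ p ∈ G.ed, ∀ q ∈ G.ed, p.1 = q.1 → p = q) ∧
  (∀ p ∈ G.ed, ∀ q ∈ G.ed, p.2 = q.2 → p = q)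

def eps : BD := ⟨[], ∅, ∅, ∅⟩

theorem eps_valid : eps.Valid := by
  refine ⟨?_, ?_, ?_, ?_, ?_, ?_⟩ <;> simp [eps, Valid, omega]

def HfUp (G : BD) : Finset ℕ := G.up \ G.ed.image Prod.fst
def HfDn (G : BD) : Finset ℕ := G.dn \ G.ed.image Prod.snd
def hfUp (G : BD) : ℕ := G.HfUp.card
def hfDn (G : BD) : ℕ := G.HfDn.card
def hc (G : BD) : ℕ :=
  (G.omega - G.ed.card - G.hfUp) + (G.omega - G.ed.card - G.hfDn)

/-- composition of `G'` over `G` along a matching `s` -/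
def comp (G G' : BD) (s : Finset (ℕ × ℕ)) : BD where
  lam := G.lam ++ G'.lam
  up := G.up ∪ G'.up.image (· + G.omega)
  dn := G.dn ∪ G'.dn.image (· + G.omega)
  ed := G.ed ∪ s.image (fun p => (p.1, p.2 + G.omega)) ∪
        G'.ed.image (fun p => (p.1 + G.omega, p.2 + G.omega))

/-- `s` encodes a strictly increasing sequence `a₁ < ⋯ < a_k` of elements of `H_f↑(G)`
matched with pairwise distinct elements `b₁,…,b_k` of `H_f↓(G')`. -/
def Matching (G G' : BD) (s : Finset (ℕ × ℕ)) : Prop :=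
  (∀ p ∈ s, p.1 ∈ G.HfUp ∧ p.2 ∈ G'.HfDn) ∧
  (∀ p ∈ s, ∀ q ∈ s, p.1 = q.1 → p = q) ∧
  (∀ p ∈ s, ∀ q ∈ s, p.2 = q.2 → p = q)

open scoped Classical in
noncomputable def matchings (G G' : BD) : Finset (Finset (ℕ × ℕ)) :=
  (G.HfUp ×ˢ G'.HfDn).powerset.filter (fun s => Matching G G' s)

/-- juxtaposition -/
def juxt (G G' : BD) : BD := comp G G' ∅

def Indiv (G : BD) : Prop :=
  ∀ G₁ G₂ : BD, G₁.Valid → G₂.Valid → G = juxt G₁ G₂ → G₁ = G ∨ G₂ = G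

/-- half-edges attached to the vertices in `I` -/
def HI (G : BD) (I : Finset ℕ) : Finset ℕ :=
  (Finset.Icc 1 G.omega).filter (fun k => G.v k ∈ I)

/-- the increasing relabelling bijection -/
def phi (G : BD) (I : Finset ℕ) (k : ℕ) : ℕ := ((G.HI I).filter (· ≤ k)).card

/-- sub-B-diagram on the set of vertices `I` -/
def sub (G : BD) (I : Finset ℕ) : BD where
  lam := ((List.range G.lam.length).filter (fun i => i + 1 ∈ I)).map (fun i => G.lam.getD i 0)
  up := (G.up ∩ G.HI I).image (G.phi I)
  dn := (G.dn ∩ G.HI I).image (G.phi I)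
  ed := (G.ed.filter (fun p => G.v p.1 ∈ I ∧ G.v p.2 ∈ I)).image
          (fun p => (G.phi I p.1, G.phi I p.2))

def Isolated (G : BD) (I : Finset ℕ) : Prop :=
  ∀ p ∈ G.ed, (G.v p.1 ∈ I ↔ G.v p.2 ∈ I)

def Connected (G : BD) : Prop :=
  ∀ i j : ℕ, 1 ≤ i → i < j → j ≤ G.nv →
    ∃ (k : ℕ) (c : Fin (k + 1) → ℕ × ℕ),
      (∀ ℓ, c ℓ ∈ G.ed) ∧
      (i = G.v (c 0).1 ∨ i = G.v (c 0).2) ∧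
      (j = G.v (c (Fin.last k)).1 ∨ j = G.v (c (Fin.last k)).2) ∧
      ∀ ℓ : Fin k,
        G.v (c ℓ.castSucc).1 = G.v (c ℓ.succ).1 ∨ G.v (c ℓ.castSucc).1 = G.v (c ℓ.succ).2 ∨
        G.v (c ℓ.castSucc).2 = G.v (c ℓ.succ).1 ∨ G.v (c ℓ.castSucc).2 = G.v (c ℓ.succ).2

def IsConnComp (G : BD) (I : Finset ℕ) : Prop :=
  I ⊆ Finset.Icc 1 G.nv ∧ I.Nonempty ∧ (G.sub I).Connected ∧
  ∀ J : Finset ℕ, I ⊆ J → J ⊆ Finset.Icc 1 G.nv → (G.sub J).Connected → J = I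

end BD

open scoped TensorProduct

/-- B-diagrams -/
abbrev BDiagram := {G : BD // G.Valid}

/-- the free `ℂ`-vector space on the set of B-diagrams -/
abbrev BSpace := BDiagram →₀ ℂ

open scoped Classical in
noncomputable def mkB (G : BD) : BSpace :=
  if h : G.Valid then Finsupp.single ⟨G, h⟩ 1 else 0

noncomputable def unitB : BSpace := Finsupp.single ⟨BD.eps, BD.eps_valid⟩ 1

noncomputable def liftB {V : Type*} [AddCommMonoid V] [Module ℂ V] (f : BDiagram → V) :
    BSpace →ₗ[ℂ] V :=
  Finsupp.lsum ℂ fun A => LinearMap.toSpanSingleton ℂ V (f A)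

noncomputable def mulfun (A B : BDiagram) : BSpace :=
  ∑ s ∈ BD.matchings A.1 B.1, mkB (BD.comp A.1 B.1 s)

/-- the product ⋆ of the algebra of B-diagrams, as a bilinear map -/
noncomputable def starB : BSpace →ₗ[ℂ] BSpace →ₗ[ℂ] BSpace :=
  liftB fun A => liftB fun B => mulfun A B

open scoped Classical in
/-- the coproduct evaluated on a B-diagram -/
noncomputable def dfun (A : BDiagram) : BSpace ⊗[ℂ] BSpace :=
  ∑ I ∈ (Finset.Icc 1 A.1.nv).powerset.filter (fun I => A.1.Isolated I),
    mkB (A.1.sub I) ⊗ₜ[ℂ] mkB (A.1.sub (Finset.Icc 1 A.1.nv \ I))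

/-- the coproduct Δ of ℬ -/
noncomputable def deltaL : BSpace →ₗ[ℂ] BSpace ⊗[ℂ] BSpace := liftB dfun

/-- the counit of ℬ -/
noncomputable def counitB : BSpace →ₗ[ℂ] ℂ :=
  liftB fun A => if A.1 = BD.eps then (1 : ℂ) else 0

/-- the product of ℬ as a linear map on the tensor square -/
noncomputable def muB : BSpace ⊗[ℂ] BSpace →ₗ[ℂ] BSpace := TensorProduct.lift starB

/-- the componentwise product `(x ⊗ y) ⋆ (x' ⊗ y') = (x ⋆ x') ⊗ (y ⋆ y')` on ℬ ⊗ ℬ -/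
noncomputable def star2 (x y : BSpace ⊗[ℂ] BSpace) : BSpace ⊗[ℂ] BSpace :=
  TensorProduct.map muB muB
    (TensorProduct.tensorTensorTensorComm ℂ BSpace BSpace BSpace BSpace (x ⊗ₜ[ℂ] y))


namespace BDP

def lv (l : List ℕ) (k : ℕ) : ℕ :=
  (List.range l.length).countP (fun i => (l.take i).sum < k)
def lHI (l : List ℕ) (I : Finset ℕ) : Finset ℕ :=
  (Finset.Icc 1 l.sum).filter (fun k => lv l k ∈ I)
def lphi (l : List ℕ) (I : Finset ℕ) (k : ℕ) : ℕ := ((lHI l I).filter (· ≤ k)).card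
def lsub (l : List ℕ) (I : Finset ℕ) : List ℕ :=
  ((List.range l.length).filter (fun i => i + 1 ∈ I)).map (fun i => l.getD i 0)

theorem lv_append_left (l m : List ℕ) (k : ℕ) (h : k ≤ l.sum) : lv (l ++ m) k = lv l k := by
  unfold lv
  rw [List.length_append, List.range_add, List.countP_append, List.countP_map]
  have h1 : List.countP ((fun i => decide (((l ++ m).take i).sum < k)) ∘ (fun x => l.length + x))
      (List.range m.length) = 0 := by
    rw [List.countP_eq_zero]
    intro a _
    simp [List.take_append, List.take_of_length_le (Nat.le_add_right l.length a)]
    omega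
  rw [h1, Nat.add_zero]
  apply List.countP_congr
  intro a ha
  have : a ≤ l.length := by simp at ha; omega
  simp [List.take_append, Nat.sub_eq_zero_of_le this]

theorem take_sum_le (l : List ℕ) (i : ℕ) : (l.take i).sum ≤ l.sum := by
  conv_rhs => rw [← List.take_append_drop i l]
  rw [List.sum_append]; omega

theorem lv_append_right (l m : List ℕ) (k : ℕ) (h : 1 ≤ k) :
    lv (l ++ m) (k + l.sum) = lv m k + l.length := by
  unfold lv
  rw [List.length_append, List.range_add, List.countP_append, List.countP_map]
  have h1 : List.countP (fun i => decide (((l ++ m).take i).sum < k + l.sum))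
      (List.range l.length) = l.length := by
    conv_rhs => rw [← List.length_range (n := l.length)]
    rw [List.countP_eq_length]
    intro a ha
    have h2 : a ≤ l.length := by simp at ha; omega
    have := take_sum_le l a
    simp [List.take_append, Nat.sub_eq_zero_of_le h2]
    omega
  rw [h1, Nat.add_comm]
  congr 1
  apply List.countP_congr
  intro a ha
  simp [List.take_append, List.take_of_length_le (Nat.le_add_right l.length a)]
  omega

theorem lv_le (l : List ℕ) (k : ℕ) : lv l k ≤ l.length := by
  unfold lv
  exact (List.countP_le_length).trans (by simp)

theorem lv_pos (l : List ℕ) (k : ℕ) (h : 1 ≤ k) (h' : k ≤ l.sum) : 1 ≤ lv l k := by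
  unfold lv
  rw [Nat.succ_le_iff, List.countP_pos_iff]
  refine ⟨0, ?_, by have h0 : 0 < k := h
                    simp [h0]⟩
  cases l with
  | nil => simp at h'; omega
  | cons a l => simp

def Split (n : ℕ) (K I J : Finset ℕ) : Prop :=
  (∀ i, 1 ≤ i → i ≤ n → (i ∈ K ↔ i ∈ I)) ∧ (∀ i, 1 ≤ i → (i + n ∈ K ↔ i ∈ J))

theorem mem_lHI {l : List ℕ} {I : Finset ℕ} {k : ℕ} :
    k ∈ lHI l I ↔ (1 ≤ k ∧ k ≤ l.sum) ∧ lv l k ∈ I := by simp [lHI]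

theorem mem_lHI_left {l m : List ℕ} {K I J : Finset ℕ} (hs : Split l.length K I J) {k : ℕ}
    (h : k ≤ l.sum) : k ∈ lHI (l ++ m) K ↔ k ∈ lHI l I := by
  simp only [mem_lHI, lv_append_left l m k h, List.sum_append]
  constructor
  · rintro ⟨⟨h1, h2⟩, h3⟩
    exact ⟨⟨h1, h⟩, (hs.1 _ (lv_pos _ _ h1 h) (lv_le _ _)).1 h3⟩
  · rintro ⟨⟨h1, h2⟩, h3⟩
    exact ⟨⟨h1, by omega⟩, (hs.1 _ (lv_pos _ _ h1 h) (lv_le _ _)).2 h3⟩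

theorem mem_lHI_right {l m : List ℕ} {K I J : Finset ℕ} (hs : Split l.length K I J) {k : ℕ}
    (h : 1 ≤ k) : k + l.sum ∈ lHI (l ++ m) K ↔ k ∈ lHI m J := by
  simp only [mem_lHI, lv_append_right l m k h, List.sum_append]
  constructor
  · rintro ⟨⟨h1, h2⟩, h3⟩
    have h4 : k ≤ m.sum := by omega
    exact ⟨⟨h, h4⟩, (hs.2 _ (lv_pos _ _ h h4)).1 h3⟩
  · rintro ⟨⟨h1, h2⟩, h3⟩
    exact ⟨⟨by omega, by omega⟩, (hs.2 _ (lv_pos _ _ h h2)).2 h3⟩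

theorem lphi_left {l m : List ℕ} {K I J : Finset ℕ} (hs : Split l.length K I J) {k : ℕ}
    (h : k ≤ l.sum) : lphi (l ++ m) K k = lphi l I k := by
  unfold lphi
  congr 1
  ext a
  simp only [Finset.mem_filter]
  constructor
  · rintro ⟨h1, h2⟩; exact ⟨(mem_lHI_left hs (h2.trans h)).1 h1, h2⟩
  · rintro ⟨h1, h2⟩; exact ⟨(mem_lHI_left hs (h2.trans h)).2 h1, h2⟩

theorem lphi_right {l m : List ℕ} {K I J : Finset ℕ} (hs : Split l.length K I J) {k : ℕ} :
    lphi (l ++ m) K (k + l.sum) = lphi m J k + (lHI l I).card := by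
  unfold lphi
  have : (lHI (l ++ m) K).filter (· ≤ k + l.sum) =
      ((lHI m J).filter (· ≤ k)).image (· + l.sum) ∪ lHI l I := by
    ext a
    simp only [Finset.mem_filter, Finset.mem_union, Finset.mem_image]
    by_cases ha : a ≤ l.sum
    · rw [mem_lHI_left hs ha]
      constructor
      · rintro ⟨h1, h2⟩; exact Or.inr h1
      · rintro (⟨b, ⟨h1, h2⟩, rfl⟩ | h)
        · have := mem_lHI.1 h1; omega
        · exact ⟨h, by omega⟩
    · obtain ⟨b, rfl⟩ : ∃ b, a = b + l.sum := ⟨a - l.sum, by omega⟩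
      rw [mem_lHI_right hs (by omega)]
      constructor
      · rintro ⟨h1, h2⟩; exact Or.inl ⟨b, ⟨h1, by omega⟩, rfl⟩
      · rintro (⟨b', ⟨h1, h2⟩, h3⟩ | h)
        · obtain rfl : b' = b := by omega
          exact ⟨h1, by omega⟩
        · have := mem_lHI.1 h; omega
  rw [this, Finset.card_union_of_disjoint, Finset.card_image_of_injective]
  · intro a b h; simpa using h
  · rw [Finset.disjoint_left]
    intro a ha hb
    simp only [Finset.mem_filter, Finset.mem_image] at ha
    obtain ⟨b, ⟨h1, h2⟩, rfl⟩ := ha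
    have := mem_lHI.1 h1
    have := mem_lHI.1 hb
    omega

theorem card_lHI_append {l m : List ℕ} {K I J : Finset ℕ} (hs : Split l.length K I J) :
    (lHI (l ++ m) K).card = (lHI m J).card + (lHI l I).card := by
  have h := lphi_right (m := m) hs (k := m.sum)
  have aux : ∀ (l : List ℕ) I, lphi l I l.sum = (lHI l I).card := by
    intro l I
    unfold lphi
    congr 1
    rw [Finset.filter_eq_self]
    intro a ha
    exact (mem_lHI.1 ha).1.2
  rw [aux, show m.sum + l.sum = (l ++ m).sum by rw [List.sum_append, Nat.add_comm], aux] at h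
  exact h

theorem lsub_append {l m : List ℕ} {K I J : Finset ℕ} (hs : Split l.length K I J) :
    lsub (l ++ m) K = lsub l I ++ lsub m J := by
  unfold lsub
  rw [List.length_append, List.range_add, List.filter_append, List.map_append]
  congr 1
  · have : List.filter (fun i => decide (i + 1 ∈ K)) (List.range l.length) =
      List.filter (fun i => decide (i + 1 ∈ I)) (List.range l.length) := by
      apply List.filter_congr
      intro a ha
      have := hs.1 (a + 1) (by omega) (by simp at ha; omega)
      simp [this]
    rw [this]
    apply List.map_congr_left
    intro a ha
    have : a < l.length := by simp at ha; exact ha.1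
    simp [List.getD_eq_getElem?_getD, List.getElem?_append_left this]
  · rw [List.filter_map, List.map_map]
    have : List.filter ((fun i => decide (i + 1 ∈ K)) ∘ fun x => l.length + x) (List.range m.length) =
      List.filter (fun i => decide (i + 1 ∈ J)) (List.range m.length) := by
      apply List.filter_congr
      intro a ha
      have := hs.2 (a + 1) (by omega)
      have e : l.length + a + 1 = a + 1 + l.length := by omega
      simp only [Function.comp, e, this]
    rw [this]
    apply List.map_congr_left
    intro a ha
    simp [List.getD_eq_getElem?_getD, List.getElem?_append_right]

def shift (n : ℕ) (K : Finset ℕ) : Finset ℕ := (K.filter (n < ·)).image (· - n)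

theorem split_shift (n : ℕ) (K : Finset ℕ) : Split n K K (shift n K) := by
  refine ⟨fun _ _ _ => Iff.rfl, fun i hi => ?_⟩
  simp only [shift, Finset.mem_image, Finset.mem_filter]
  constructor
  · intro h; exact ⟨i + n, ⟨h, by omega⟩, by omega⟩
  · rintro ⟨a, ⟨h1, h2⟩, rfl⟩
    rwa [Nat.sub_add_cancel h2.le]

theorem lv_single (x k : ℕ) (h : 1 ≤ k) : lv [x] k = 1 := by
  have h0 : 0 < k := h
  simp [lv, List.range_succ, h0]

theorem lsub_single (x : ℕ) (J : Finset ℕ) : lsub [x] J = if 1 ∈ J then [x] else [] := by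
  by_cases h : 1 ∈ J <;> simp [lsub, List.range_succ, h]

theorem lHI_single (x : ℕ) (J : Finset ℕ) :
    lHI [x] J = if 1 ∈ J then Finset.Icc 1 x else ∅ := by
  ext k
  rw [mem_lHI]
  by_cases hk : 1 ≤ k
  · rw [lv_single x k hk]
    by_cases h : 1 ∈ J <;> simp [h]
  · by_cases h : 1 ∈ J <;> simp [h, hk]

theorem card_lHI (l : List ℕ) (I : Finset ℕ) : (lHI l I).card = (lsub l I).sum := by
  induction l using List.reverseRecOn with
  | nil => simp [lHI, lsub]
  | append_singleton l x ih =>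
    rw [card_lHI_append (split_shift _ I), lsub_append (split_shift _ I), List.sum_append, ih,
      lHI_single, lsub_single]
    by_cases h : 1 ∈ shift l.length I <;> simp [h, Nat.add_comm]

theorem card_filter_succ (n : ℕ) (I : Finset ℕ) :
    ((Finset.Icc 1 (n + 1)).filter (· ∈ I)).card =
      ((Finset.Icc 1 n).filter (· ∈ I)).card + if n + 1 ∈ I then 1 else 0 := by
  rw [← Finset.insert_Icc_right_eq_Icc_add_one (by omega), Finset.filter_insert]
  split_ifs with h
  · rw [Finset.card_insert_of_notMem (by simp)]
  · rfl

theorem length_lsub (l : List ℕ) (I : Finset ℕ) :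
    (lsub l I).length = ((Finset.Icc 1 l.length).filter (· ∈ I)).card := by
  induction l using List.reverseRecOn with
  | nil => simp [lsub]
  | append_singleton l x ih =>
    rw [lsub_append (split_shift _ I), List.length_append, ih, lsub_single, List.length_append,
      List.length_singleton, card_filter_succ]
    have := (split_shift l.length I).2 1 le_rfl
    rw [Nat.add_comm] at this
    simp only [this]
    split_ifs <;> rfl

theorem lphi_pos {l : List ℕ} {I : Finset ℕ} {k : ℕ} (h : k ∈ lHI l I) : 1 ≤ lphi l I k := by
  unfold lphi
  rw [Nat.succ_le_iff, Finset.card_pos]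
  exact ⟨k, by simp [h]⟩

theorem lphi_le (l : List ℕ) (I : Finset ℕ) (k : ℕ) : lphi l I k ≤ (lHI l I).card :=
  Finset.card_le_card (Finset.filter_subset _ _)

theorem lphi_lt {l : List ℕ} {I : Finset ℕ} {a b : ℕ} (hb : b ∈ lHI l I) (h : a < b) :
    lphi l I a < lphi l I b := by
  unfold lphi
  apply Finset.card_lt_card
  rw [Finset.ssubset_iff_of_subset]
  · exact ⟨b, by simp [hb], by simp [h]⟩
  · intro c; simp only [Finset.mem_filter]; rintro ⟨h1, h2⟩; exact ⟨h1, by omega⟩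

theorem lphi_inj {l : List ℕ} {I : Finset ℕ} {a b : ℕ} (ha : a ∈ lHI l I) (hb : b ∈ lHI l I)
    (h : lphi l I a = lphi l I b) : a = b := by
  rcases lt_trichotomy a b with h1 | h1 | h1
  · have := lphi_lt hb h1; omega
  · exact h1
  · have := lphi_lt ha h1; omega

theorem lv_lsub (l : List ℕ) (I : Finset ℕ) : ∀ k ∈ lHI l I,
    lv (lsub l I) (lphi l I k) = ((Finset.Icc 1 (lv l k)).filter (· ∈ I)).card := by
  induction l using List.reverseRecOn with
  | nil => simp [lHI]
  | append_singleton l x ih =>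
    intro k hk
    have hs := split_shift l.length I
    rw [lsub_append hs]
    by_cases h : k ≤ l.sum
    · have hk' := (mem_lHI_left hs h).1 hk
      rw [lphi_left hs h, lv_append_left _ _ _ h, lv_append_left, ih k hk']
      rw [← card_lHI]; exact lphi_le _ _ _
    · obtain ⟨b, rfl⟩ : ∃ b, k = b + l.sum := ⟨k - l.sum, by omega⟩
      have hb : 1 ≤ b := by omega
      have hk' := (mem_lHI_right hs hb).1 hk
      have h1 : 1 ∈ shift l.length I := by
        rw [lHI_single] at hk'
        by_contra hc
        simp [hc] at hk'
      rw [lphi_right hs, card_lHI, lv_append_right _ _ _ (lphi_pos hk'),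
        lv_append_right _ _ _ hb, lsub_single, if_pos h1, lv_single _ _ (lphi_pos hk'),
        lv_single _ _ hb, length_lsub, Nat.add_comm 1 l.length, card_filter_succ, if_pos, Nat.add_comm]
      have := hs.2 1 le_rfl
      rw [Nat.add_comm]; exact this.2 h1

theorem lv_lsub_lt {l : List ℕ} {I : Finset ℕ} {a b : ℕ} (ha : a ∈ lHI l I) (hb : b ∈ lHI l I)
    (h : lv l a < lv l b) : lv (lsub l I) (lphi l I a) < lv (lsub l I) (lphi l I b) := by
  rw [lv_lsub l I a ha, lv_lsub l I b hb]
  apply Finset.card_lt_card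
  rw [Finset.ssubset_iff_of_subset]
  · refine ⟨lv l b, ?_, ?_⟩
    · simp [(mem_lHI.1 hb).2]; omega
    · simp [h]
  · intro c; simp only [Finset.mem_filter, Finset.mem_Icc]; rintro ⟨⟨h1, h2⟩, h3⟩
    exact ⟨⟨h1, by omega⟩, h3⟩

theorem lsub_pos {l : List ℕ} (hl : ∀ x ∈ l, 0 < x) (I : Finset ℕ) : ∀ x ∈ lsub l I, 0 < x := by
  intro x hx
  simp only [lsub, List.mem_map, List.mem_filter, List.mem_range] at hx
  obtain ⟨a, ⟨h1, -⟩, rfl⟩ := hx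
  rw [List.getD_eq_getElem _ _ h1]
  exact hl _ (List.getElem_mem h1)

end BDP

namespace BDP

theorem v_eq (G : BD) : G.v = lv G.lam := rfl
theorem HI_eq (G : BD) : G.HI = lHI G.lam := rfl
theorem phi_eq (G : BD) : G.phi = lphi G.lam := rfl
theorem sub_lam (G : BD) (I : Finset ℕ) : (G.sub I).lam = lsub G.lam I := rfl
theorem omega_sub (G : BD) (I : Finset ℕ) : (G.sub I).omega = (lHI G.lam I).card :=
  (card_lHI _ _).symm

theorem mem_HI {G : BD} {I : Finset ℕ} {k : ℕ} :
    k ∈ G.HI I ↔ (1 ≤ k ∧ k ≤ G.omega) ∧ G.v k ∈ I := mem_lHI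

theorem up_range {G : BD} (h : G.Valid) {a : ℕ} (ha : a ∈ G.up) : 1 ≤ a ∧ a ≤ G.omega := by
  simpa using h.2.1 ha
theorem dn_range {G : BD} (h : G.Valid) {a : ℕ} (ha : a ∈ G.dn) : 1 ≤ a ∧ a ≤ G.omega := by
  simpa using h.2.2.1 ha

theorem phi_mem_Icc {G : BD} {I : Finset ℕ} {k : ℕ} (h : k ∈ G.HI I) :
    G.phi I k ∈ Finset.Icc 1 (G.sub I).omega := by
  rw [omega_sub, Finset.mem_Icc]
  exact ⟨lphi_pos h, lphi_le _ _ _⟩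

theorem phi_inj {G : BD} {I : Finset ℕ} {a b : ℕ} (ha : a ∈ G.HI I) (hb : b ∈ G.HI I)
    (h : G.phi I a = G.phi I b) : a = b := lphi_inj ha hb h

theorem mem_sub_ed {G : BD} {I : Finset ℕ} {x : ℕ × ℕ} : x ∈ (G.sub I).ed ↔
    ∃ p ∈ G.ed, (G.v p.1 ∈ I ∧ G.v p.2 ∈ I) ∧ (G.phi I p.1, G.phi I p.2) = x := by
  simp only [BD.sub, Finset.mem_image, Finset.mem_filter, and_assoc]

theorem mem_sub_up {G : BD} {I : Finset ℕ} {x : ℕ} : x ∈ (G.sub I).up ↔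
    ∃ p ∈ G.up, p ∈ G.HI I ∧ G.phi I p = x := by
  simp only [BD.sub, Finset.mem_image, Finset.mem_inter, and_assoc]

theorem mem_sub_dn {G : BD} {I : Finset ℕ} {x : ℕ} : x ∈ (G.sub I).dn ↔
    ∃ p ∈ G.dn, p ∈ G.HI I ∧ G.phi I p = x := by
  simp only [BD.sub, Finset.mem_image, Finset.mem_inter, and_assoc]

theorem ed_HI {G : BD} (h : G.Valid) {I : Finset ℕ} {p : ℕ × ℕ} (hp : p ∈ G.ed)
    (hv : G.v p.1 ∈ I ∧ G.v p.2 ∈ I) : p.1 ∈ G.HI I ∧ p.2 ∈ G.HI I := by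
  obtain ⟨h1, h2, -⟩ := h.2.2.2.1 p hp
  exact ⟨mem_HI.2 ⟨up_range h h1, hv.1⟩, mem_HI.2 ⟨dn_range h h2, hv.2⟩⟩

theorem sub_valid {G : BD} (h : G.Valid) (I : Finset ℕ) : (G.sub I).Valid := by
  refine ⟨lsub_pos h.1 I, ?_, ?_, ?_, ?_, ?_⟩
  · intro x hx
    obtain ⟨p, -, hp, rfl⟩ := mem_sub_up.1 hx
    exact phi_mem_Icc hp
  · intro x hx
    obtain ⟨p, -, hp, rfl⟩ := mem_sub_dn.1 hx
    exact phi_mem_Icc hp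
  · intro x hx
    obtain ⟨p, hp, hv, rfl⟩ := mem_sub_ed.1 hx
    have hh := ed_HI h hp hv
    obtain ⟨h1, h2, h3⟩ := h.2.2.2.1 p hp
    exact ⟨mem_sub_up.2 ⟨_, h1, hh.1, rfl⟩, mem_sub_dn.2 ⟨_, h2, hh.2, rfl⟩,
      lv_lsub_lt hh.1 hh.2 h3⟩
  · intro x hx y hy e
    obtain ⟨p, hp, hv, rfl⟩ := mem_sub_ed.1 hx
    obtain ⟨q, hq, hw, rfl⟩ := mem_sub_ed.1 hy
    rw [h.2.2.2.2.1 p hp q hq (phi_inj (ed_HI h hp hv).1 (ed_HI h hq hw).1 e)]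
  · intro x hx y hy e
    obtain ⟨p, hp, hv, rfl⟩ := mem_sub_ed.1 hx
    obtain ⟨q, hq, hw, rfl⟩ := mem_sub_ed.1 hy
    rw [h.2.2.2.2.2 p hp q hq (phi_inj (ed_HI h hp hv).2 (ed_HI h hq hw).2 e)]

theorem mem_HfUp {G : BD} {a : ℕ} : a ∈ G.HfUp ↔ a ∈ G.up ∧ ∀ p ∈ G.ed, p.1 ≠ a := by
  simp only [BD.HfUp, Finset.mem_sdiff, Finset.mem_image, not_exists, not_and, ne_eq]
theorem mem_HfDn {G : BD} {a : ℕ} : a ∈ G.HfDn ↔ a ∈ G.dn ∧ ∀ p ∈ G.ed, p.2 ≠ a := by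
  simp only [BD.HfDn, Finset.mem_sdiff, Finset.mem_image, not_exists, not_and, ne_eq]

theorem v_comp_left {A B : BD} {s : Finset (ℕ × ℕ)} {k : ℕ} (h : k ≤ A.omega) :
    (BD.comp A B s).v k = A.v k := lv_append_left _ _ _ h
theorem v_comp_right {A B : BD} {s : Finset (ℕ × ℕ)} {k : ℕ} (h : 1 ≤ k) :
    (BD.comp A B s).v (k + A.omega) = B.v k + A.nv := lv_append_right _ _ _ h

theorem v_le (G : BD) (k : ℕ) : G.v k ≤ G.nv := lv_le _ _
theorem v_pos {G : BD} {k : ℕ} (h : 1 ≤ k ∧ k ≤ G.omega) : 1 ≤ G.v k := lv_pos _ _ h.1 h.2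

theorem mem_comp_up {A B : BD} {s : Finset (ℕ × ℕ)} {x : ℕ} : x ∈ (BD.comp A B s).up ↔
    x ∈ A.up ∨ ∃ b ∈ B.up, b + A.omega = x := by simp [BD.comp]
theorem mem_comp_dn {A B : BD} {s : Finset (ℕ × ℕ)} {x : ℕ} : x ∈ (BD.comp A B s).dn ↔
    x ∈ A.dn ∨ ∃ b ∈ B.dn, b + A.omega = x := by simp [BD.comp]
theorem mem_comp_ed {A B : BD} {s : Finset (ℕ × ℕ)} {x : ℕ × ℕ} : x ∈ (BD.comp A B s).ed ↔
    x ∈ A.ed ∨ (∃ p ∈ s, (p.1, p.2 + A.omega) = x) ∨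
      ∃ p ∈ B.ed, (p.1 + A.omega, p.2 + A.omega) = x := by
  simp only [BD.comp, Finset.mem_union, Finset.mem_image, or_assoc]

theorem omega_comp (A B : BD) (s : Finset (ℕ × ℕ)) :
    (BD.comp A B s).omega = A.omega + B.omega := List.sum_append

theorem comp_valid {A B : BD} (hA : A.Valid) (hB : B.Valid) {s : Finset (ℕ × ℕ)}
    (hs : BD.Matching A B s) : (BD.comp A B s).Valid := by
  have hsr : ∀ p ∈ s, (p.1 ∈ A.up ∧ ∀ q ∈ A.ed, q.1 ≠ p.1) ∧
      (p.2 ∈ B.dn ∧ ∀ q ∈ B.ed, q.2 ≠ p.2) :=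
    fun p hp => ⟨mem_HfUp.1 (hs.1 p hp).1, mem_HfDn.1 (hs.1 p hp).2⟩
  refine ⟨?_, ?_, ?_, ?_, ?_, ?_⟩
  · intro x hx
    rcases List.mem_append.1 hx with h | h
    · exact hA.1 x h
    · exact hB.1 x h
  · intro x hx
    rw [omega_comp, Finset.mem_Icc]
    rcases mem_comp_up.1 hx with h | ⟨b, h, rfl⟩
    · have := up_range hA h; omega
    · have := up_range hB h; omega
  · intro x hx
    rw [omega_comp, Finset.mem_Icc]
    rcases mem_comp_dn.1 hx with h | ⟨b, h, rfl⟩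
    · have := dn_range hA h; omega
    · have := dn_range hB h; omega
  · intro x hx
    rcases mem_comp_ed.1 hx with h | ⟨p, hp, rfl⟩ | ⟨p, hp, rfl⟩
    · obtain ⟨h1, h2, h3⟩ := hA.2.2.2.1 x h
      refine ⟨mem_comp_up.2 (Or.inl h1), mem_comp_dn.2 (Or.inl h2), ?_⟩
      rwa [v_comp_left (up_range hA h1).2, v_comp_left (dn_range hA h2).2]
    · obtain ⟨⟨h1, -⟩, ⟨h2, -⟩⟩ := hsr p hp
      refine ⟨mem_comp_up.2 (Or.inl h1), mem_comp_dn.2 (Or.inr ⟨_, h2, rfl⟩), ?_⟩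
      have h3 := dn_range hB h2
      rw [v_comp_left (up_range hA h1).2, v_comp_right h3.1]
      have := v_le A p.1
      have := v_pos h3
      omega
    · obtain ⟨h1, h2, h3⟩ := hB.2.2.2.1 p hp
      refine ⟨mem_comp_up.2 (Or.inr ⟨_, h1, rfl⟩), mem_comp_dn.2 (Or.inr ⟨_, h2, rfl⟩), ?_⟩
      rw [v_comp_right (up_range hB h1).1, v_comp_right (dn_range hB h2).1]
      omega
  · have rA : ∀ p ∈ A.ed, p.1 ≤ A.omega := fun p hp => (up_range hA (hA.2.2.2.1 p hp).1).2
    have rB : ∀ p ∈ B.ed, 1 ≤ p.1 := fun p hp => (up_range hB (hB.2.2.2.1 p hp).1).1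
    have rs : ∀ p ∈ s, p.1 ≤ A.omega := fun p hp => (up_range hA (hsr p hp).1.1).2
    intro x hx y hy e
    rcases mem_comp_ed.1 hx with h | ⟨p, hp, rfl⟩ | ⟨p, hp, rfl⟩ <;>
      rcases mem_comp_ed.1 hy with h' | ⟨q, hq, rfl⟩ | ⟨q, hq, rfl⟩ <;> try dsimp only at e
    · exact hA.2.2.2.2.1 _ h _ h' e
    · exact absurd e ((hsr q hq).1.2 _ h)
    · have := rA _ h; have := rB _ hq; omega
    · exact absurd e.symm ((hsr p hp).1.2 _ h')
    · rw [hs.2.1 p hp q hq e]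
    · have := rs _ hp; have := rB _ hq; omega
    · have := rA _ h'; have := rB _ hp; omega
    · have := rs _ hq; have := rB _ hp; omega
    · rw [hB.2.2.2.2.1 p hp q hq (by omega)]
  · have rA : ∀ p ∈ A.ed, p.2 ≤ A.omega := fun p hp => (dn_range hA (hA.2.2.2.1 p hp).2.1).2
    have rB : ∀ p ∈ B.ed, 1 ≤ p.2 := fun p hp => (dn_range hB (hB.2.2.2.1 p hp).2.1).1
    have rs : ∀ p ∈ s, 1 ≤ p.2 := fun p hp => (dn_range hB (hsr p hp).2.1).1
    intro x hx y hy e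
    rcases mem_comp_ed.1 hx with h | ⟨p, hp, rfl⟩ | ⟨p, hp, rfl⟩ <;>
      rcases mem_comp_ed.1 hy with h' | ⟨q, hq, rfl⟩ | ⟨q, hq, rfl⟩ <;> try dsimp only at e
    · exact hA.2.2.2.2.2 _ h _ h' e
    · have := rA _ h; have := rs _ hq; omega
    · have := rA _ h; have := rB _ hq; omega
    · have := rA _ h'; have := rs _ hp; omega
    · rw [hs.2.2 p hp q hq (by omega)]
    · exact absurd (by omega) ((hsr p hp).2.2 _ hq)
    · have := rA _ h'; have := rB _ hp; omega
    · exact absurd (by omega) ((hsr q hq).2.2 _ hp)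
    · rw [hB.2.2.2.2.2 p hp q hq (by omega)]

/-- restriction of a matching -/
def rs (A B : BD) (I J : Finset ℕ) (s : Finset (ℕ × ℕ)) : Finset (ℕ × ℕ) :=
  (s.filter (fun p => A.v p.1 ∈ I ∧ B.v p.2 ∈ J)).image (fun p => (A.phi I p.1, B.phi J p.2))

theorem img_congr {α β : Type*} [DecidableEq β] (S : Finset α) (p q : α → Prop)
    [DecidablePred p] [DecidablePred q] (f g : α → β)
    (h : ∀ x ∈ S, (p x ↔ q x) ∧ f x = g x) : (S.filter p).image f = (S.filter q).image g := by
  rw [Finset.filter_congr (fun x hx => (h x hx).1)]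
  apply Finset.image_congr
  intro x hx
  exact (h x (Finset.mem_filter.1 hx).1).2

theorem sub_comp {A B : BD} (hA : A.Valid) (hB : B.Valid) {s : Finset (ℕ × ℕ)}
    (hs : BD.Matching A B s) {K I J : Finset ℕ} (hK : Split A.nv K I J) :
    (BD.comp A B s).sub K = BD.comp (A.sub I) (B.sub J) (rs A B I J s) := by
  have pl : ∀ k, k ≤ A.omega → (BD.comp A B s).phi K k = A.phi I k := fun k h => lphi_left hK h
  have pr : ∀ k, (BD.comp A B s).phi K (k + A.omega) = B.phi J k + (A.sub I).omega := by
    intro k; rw [omega_sub]; exact lphi_right hK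
  have ml : ∀ k, k ≤ A.omega → (k ∈ (BD.comp A B s).HI K ↔ k ∈ A.HI I) :=
    fun k h => mem_lHI_left hK h
  have mr : ∀ k, 1 ≤ k → (k + A.omega ∈ (BD.comp A B s).HI K ↔ k ∈ B.HI J) :=
    fun k h => mem_lHI_right hK h
  have vl : ∀ k, 1 ≤ k ∧ k ≤ A.omega → ((BD.comp A B s).v k ∈ K ↔ A.v k ∈ I) := by
    intro k h
    rw [v_comp_left h.2]; exact hK.1 _ (v_pos h) (v_le _ _)
  have vr : ∀ k, 1 ≤ k ∧ k ≤ B.omega → ((BD.comp A B s).v (k + A.omega) ∈ K ↔ B.v k ∈ J) := by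
    intro k h
    rw [v_comp_right h.1]; exact hK.2 _ (v_pos h)
  have e1 : ((BD.comp A B s).sub K).lam = (BD.comp (A.sub I) (B.sub J) (rs A B I J s)).lam :=
    lsub_append hK
  have e2 : ((BD.comp A B s).sub K).up = (BD.comp (A.sub I) (B.sub J) (rs A B I J s)).up := by
    change ((A.up ∪ B.up.image (· + A.omega)) ∩ (BD.comp A B s).HI K).image
      ((BD.comp A B s).phi K) = (A.up ∩ A.HI I).image (A.phi I) ∪
        ((B.up ∩ B.HI J).image (B.phi J)).image (· + (A.sub I).omega)
    simp only [← Finset.filter_mem_eq_inter]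
    simp only [Finset.filter_union, Finset.image_union, Finset.filter_image, Finset.image_image]
    congr 1
    · apply img_congr
      intro x hx
      have := up_range hA hx
      exact ⟨ml _ this.2, pl _ this.2⟩
    · apply img_congr
      intro x hx
      have := up_range hB hx
      exact ⟨mr _ this.1, pr _⟩
  have e3 : ((BD.comp A B s).sub K).dn = (BD.comp (A.sub I) (B.sub J) (rs A B I J s)).dn := by
    change ((A.dn ∪ B.dn.image (· + A.omega)) ∩ (BD.comp A B s).HI K).image
      ((BD.comp A B s).phi K) = (A.dn ∩ A.HI I).image (A.phi I) ∪
        ((B.dn ∩ B.HI J).image (B.phi J)).image (· + (A.sub I).omega)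
    simp only [← Finset.filter_mem_eq_inter]
    simp only [Finset.filter_union, Finset.image_union, Finset.filter_image, Finset.image_image]
    congr 1
    · apply img_congr
      intro x hx
      have := dn_range hA hx
      exact ⟨ml _ this.2, pl _ this.2⟩
    · apply img_congr
      intro x hx
      have := dn_range hB hx
      exact ⟨mr _ this.1, pr _⟩
  have e4 : ((BD.comp A B s).sub K).ed = (BD.comp (A.sub I) (B.sub J) (rs A B I J s)).ed := by
    change ((A.ed ∪ s.image (fun p => (p.1, p.2 + A.omega)) ∪
        B.ed.image (fun p => (p.1 + A.omega, p.2 + A.omega))).filter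
          (fun p => (BD.comp A B s).v p.1 ∈ K ∧ (BD.comp A B s).v p.2 ∈ K)).image
          (fun p => ((BD.comp A B s).phi K p.1, (BD.comp A B s).phi K p.2)) =
      (A.ed.filter (fun p => A.v p.1 ∈ I ∧ A.v p.2 ∈ I)).image
          (fun p => (A.phi I p.1, A.phi I p.2)) ∪
        ((s.filter (fun p => A.v p.1 ∈ I ∧ B.v p.2 ∈ J)).image
          (fun p => (A.phi I p.1, B.phi J p.2))).image (fun p => (p.1, p.2 + (A.sub I).omega)) ∪
        ((B.ed.filter (fun p => B.v p.1 ∈ J ∧ B.v p.2 ∈ J)).image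
          (fun p => (B.phi J p.1, B.phi J p.2))).image
            (fun p => (p.1 + (A.sub I).omega, p.2 + (A.sub I).omega))
    simp only [Finset.filter_union, Finset.image_union, Finset.filter_image, Finset.image_image]
    congr 1
    · congr 1
      · apply img_congr
        intro x hx
        obtain ⟨h1, h2, -⟩ := hA.2.2.2.1 x hx
        have h1 := up_range hA h1
        have h2 := dn_range hA h2
        exact ⟨and_congr (vl _ h1) (vl _ h2), Prod.ext (pl _ h1.2) (pl _ h2.2)⟩
      · apply img_congr
        intro x hx
        obtain ⟨h1, h2⟩ := hs.1 x hx
        have h1 := up_range hA (mem_HfUp.1 h1).1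
        have h2 := dn_range hB (mem_HfDn.1 h2).1
        exact ⟨and_congr (vl _ h1) (vr _ h2), Prod.ext (pl _ h1.2) (pr _)⟩
    · apply img_congr
      intro x hx
      obtain ⟨h1, h2, -⟩ := hB.2.2.2.1 x hx
      have h1 := up_range hB h1
      have h2 := dn_range hB h2
      exact ⟨and_congr (vr _ h1) (vr _ h2), Prod.ext (pr _) (pr _)⟩
  generalize (BD.comp A B s).sub K = X at *
  generalize BD.comp (A.sub I) (B.sub J) (rs A B I J s) = Y at *
  cases X; cases Y
  simp only [BD.mk.injEq]
  exact ⟨e1, e2, e3, e4⟩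

theorem mem_HfUp_sub {G : BD} (h : G.Valid) {I : Finset ℕ} (hI : G.Isolated I) {x : ℕ} :
    x ∈ (G.sub I).HfUp ↔ ∃ a ∈ G.HfUp, a ∈ G.HI I ∧ G.phi I a = x := by
  rw [mem_HfUp]
  constructor
  · rintro ⟨h1, h2⟩
    obtain ⟨a, ha, hh, rfl⟩ := mem_sub_up.1 h1
    refine ⟨a, mem_HfUp.2 ⟨ha, ?_⟩, hh, rfl⟩
    rintro p hp rfl
    have hv := (mem_HI.1 hh).2
    exact h2 _ (mem_sub_ed.2 ⟨p, hp, ⟨hv, (hI p hp).1 hv⟩, rfl⟩) rfl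
  · rintro ⟨a, ha, hh, rfl⟩
    obtain ⟨h1, h2⟩ := mem_HfUp.1 ha
    refine ⟨mem_sub_up.2 ⟨a, h1, hh, rfl⟩, ?_⟩
    intro y hy e
    obtain ⟨p, hp, hv, rfl⟩ := mem_sub_ed.1 hy
    exact h2 p hp (phi_inj (ed_HI h hp hv).1 hh e)

theorem mem_HfDn_sub {G : BD} (h : G.Valid) {I : Finset ℕ} (hI : G.Isolated I) {x : ℕ} :
    x ∈ (G.sub I).HfDn ↔ ∃ a ∈ G.HfDn, a ∈ G.HI I ∧ G.phi I a = x := by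
  rw [mem_HfDn]
  constructor
  · rintro ⟨h1, h2⟩
    obtain ⟨a, ha, hh, rfl⟩ := mem_sub_dn.1 h1
    refine ⟨a, mem_HfDn.2 ⟨ha, ?_⟩, hh, rfl⟩
    rintro p hp rfl
    have hv := (mem_HI.1 hh).2
    exact h2 _ (mem_sub_ed.2 ⟨p, hp, ⟨(hI p hp).2 hv, hv⟩, rfl⟩) rfl
  · rintro ⟨a, ha, hh, rfl⟩
    obtain ⟨h1, h2⟩ := mem_HfDn.1 ha
    refine ⟨mem_sub_dn.2 ⟨a, h1, hh, rfl⟩, ?_⟩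
    intro y hy e
    obtain ⟨p, hp, hv, rfl⟩ := mem_sub_ed.1 hy
    exact h2 p hp (phi_inj (ed_HI h hp hv).2 hh e)

theorem HfUp_HI {G : BD} (h : G.Valid) {I : Finset ℕ} {a : ℕ} (ha : a ∈ G.HfUp)
    (hv : G.v a ∈ I) : a ∈ G.HI I := mem_HI.2 ⟨up_range h (mem_HfUp.1 ha).1, hv⟩
theorem HfDn_HI {G : BD} (h : G.Valid) {I : Finset ℕ} {a : ℕ} (ha : a ∈ G.HfDn)
    (hv : G.v a ∈ I) : a ∈ G.HI I := mem_HI.2 ⟨dn_range h (mem_HfDn.1 ha).1, hv⟩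

theorem mem_matchings {A B : BD} {s : Finset (ℕ × ℕ)} :
    s ∈ BD.matchings A B ↔ BD.Matching A B s := by
  simp only [BD.matchings, Finset.mem_filter, Finset.mem_powerset, and_iff_right_iff_imp]
  intro h p hp
  exact Finset.mem_product.2 (h.1 p hp)

theorem mem_rs {A B : BD} {I J : Finset ℕ} {s : Finset (ℕ × ℕ)} {x : ℕ × ℕ} :
    x ∈ rs A B I J s ↔ ∃ p ∈ s, (A.v p.1 ∈ I ∧ B.v p.2 ∈ J) ∧ (A.phi I p.1, B.phi J p.2) = x := by
  simp only [rs, Finset.mem_image, Finset.mem_filter, and_assoc]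

theorem rs_matching {A B : BD} (hA : A.Valid) (hB : B.Valid) {I J : Finset ℕ}
    (hI : A.Isolated I) (hJ : B.Isolated J) {s : Finset (ℕ × ℕ)} (hs : BD.Matching A B s) :
    BD.Matching (A.sub I) (B.sub J) (rs A B I J s) := by
  refine ⟨?_, ?_, ?_⟩
  · intro x hx
    obtain ⟨p, hp, hv, rfl⟩ := mem_rs.1 hx
    obtain ⟨h1, h2⟩ := hs.1 p hp
    exact ⟨(mem_HfUp_sub hA hI).2 ⟨_, h1, HfUp_HI hA h1 hv.1, rfl⟩,
      (mem_HfDn_sub hB hJ).2 ⟨_, h2, HfDn_HI hB h2 hv.2, rfl⟩⟩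
  · intro x hx y hy e
    obtain ⟨p, hp, hv, rfl⟩ := mem_rs.1 hx
    obtain ⟨q, hq, hw, rfl⟩ := mem_rs.1 hy
    rw [hs.2.1 p hp q hq (phi_inj (HfUp_HI hA (hs.1 p hp).1 hv.1)
      (HfUp_HI hA (hs.1 q hq).1 hw.1) e)]
  · intro x hx y hy e
    obtain ⟨p, hp, hv, rfl⟩ := mem_rs.1 hx
    obtain ⟨q, hq, hw, rfl⟩ := mem_rs.1 hy
    rw [hs.2.2 p hp q hq (phi_inj (HfDn_HI hB (hs.1 p hp).2 hv.2)
      (HfDn_HI hB (hs.1 q hq).2 hw.2) e)]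

def un (A B : BD) (I J : Finset ℕ) (t : Finset (ℕ × ℕ)) : Finset (ℕ × ℕ) :=
  (A.HfUp ×ˢ B.HfDn).filter
    (fun p => p.1 ∈ A.HI I ∧ p.2 ∈ B.HI J ∧ (A.phi I p.1, B.phi J p.2) ∈ t)

theorem mem_un {A B : BD} {I J : Finset ℕ} {t : Finset (ℕ × ℕ)} {p : ℕ × ℕ} :
    p ∈ un A B I J t ↔ (p.1 ∈ A.HfUp ∧ p.2 ∈ B.HfDn) ∧
      p.1 ∈ A.HI I ∧ p.2 ∈ B.HI J ∧ (A.phi I p.1, B.phi J p.2) ∈ t := by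
  simp only [un, Finset.mem_filter, Finset.mem_product]

theorem un_matching {A B : BD} {I J I' J' : Finset ℕ} (hII : Disjoint I I') (hJJ : Disjoint J J')
    {t t' : Finset (ℕ × ℕ)} (ht : BD.Matching (A.sub I) (B.sub J) t)
    (ht' : BD.Matching (A.sub I') (B.sub J') t') :
    BD.Matching A B (un A B I J t ∪ un A B I' J' t') := by
  have dI : ∀ a b, a = b → a ∈ A.HI I → b ∈ A.HI I' → False := by
    rintro a _ rfl h h'
    exact Finset.disjoint_left.1 hII (mem_HI.1 h).2 (mem_HI.1 h').2
  have dJ : ∀ a b, a = b → a ∈ B.HI J → b ∈ B.HI J' → False := by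
    rintro a _ rfl h h'
    exact Finset.disjoint_left.1 hJJ (mem_HI.1 h).2 (mem_HI.1 h').2
  refine ⟨?_, ?_, ?_⟩
  · intro p hp
    rcases Finset.mem_union.1 hp with h | h <;> exact (mem_un.1 h).1
  · intro p hp q hq e
    rcases Finset.mem_union.1 hp with h | h <;> rcases Finset.mem_union.1 hq with h' | h' <;>
      obtain ⟨-, a1, a2, a3⟩ := mem_un.1 h <;> obtain ⟨-, b1, b2, b3⟩ := mem_un.1 h'
    · have := ht.2.1 _ a3 _ b3 (by simp only [e])
      exact Prod.ext e (phi_inj a2 b2 (Prod.ext_iff.1 this).2)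
    · exact (dI _ _ e a1 b1).elim
    · exact (dI _ _ e.symm b1 a1).elim
    · have := ht'.2.1 _ a3 _ b3 (by simp only [e])
      exact Prod.ext e (phi_inj a2 b2 (Prod.ext_iff.1 this).2)
  · intro p hp q hq e
    rcases Finset.mem_union.1 hp with h | h <;> rcases Finset.mem_union.1 hq with h' | h' <;>
      obtain ⟨-, a1, a2, a3⟩ := mem_un.1 h <;> obtain ⟨-, b1, b2, b3⟩ := mem_un.1 h'
    · have := ht.2.2 _ a3 _ b3 (by simp only [e])
      exact Prod.ext (phi_inj a1 b1 (Prod.ext_iff.1 this).1) e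
    · exact (dJ _ _ e a2 b2).elim
    · exact (dJ _ _ e.symm b2 a2).elim
    · have := ht'.2.2 _ a3 _ b3 (by simp only [e])
      exact Prod.ext (phi_inj a1 b1 (Prod.ext_iff.1 this).1) e

theorem rs_un {A B : BD} (hA : A.Valid) (hB : B.Valid) {I J I' J' : Finset ℕ}
    (hI : A.Isolated I) (hJ : B.Isolated J) (hII : Disjoint I I')
    {t t' : Finset (ℕ × ℕ)} (ht : BD.Matching (A.sub I) (B.sub J) t) :
    rs A B I J (un A B I J t ∪ un A B I' J' t') = t := by
  ext x
  rw [mem_rs]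
  constructor
  · rintro ⟨p, hp, hv, rfl⟩
    rcases Finset.mem_union.1 hp with h | h
    · exact (mem_un.1 h).2.2.2
    · exact (Finset.disjoint_left.1 hII hv.1 (mem_HI.1 (mem_un.1 h).2.1).2).elim
  · intro hx
    obtain ⟨h1, h2⟩ := ht.1 x hx
    obtain ⟨a, a1, a2, a3⟩ := (mem_HfUp_sub hA hI).1 h1
    obtain ⟨b, b1, b2, b3⟩ := (mem_HfDn_sub hB hJ).1 h2
    refine ⟨(a, b), Finset.mem_union_left _ (mem_un.2 ⟨⟨a1, b1⟩, a2, b2, ?_⟩),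
      ⟨(mem_HI.1 a2).2, (mem_HI.1 b2).2⟩, Prod.ext a3 b3⟩
    dsimp only
    rw [a3, b3]; exact hx

def Good (A B : BD) (I J : Finset ℕ) (s : Finset (ℕ × ℕ)) : Prop :=
  ∀ p ∈ s, (A.v p.1 ∈ I ↔ B.v p.2 ∈ J)

theorem un_good {A B : BD} {I J I' J' : Finset ℕ} (hII : Disjoint I I') (hJJ : Disjoint J J')
    {t t' : Finset (ℕ × ℕ)} : Good A B I J (un A B I J t ∪ un A B I' J' t') := by
  intro p hp
  rcases Finset.mem_union.1 hp with h | h <;> obtain ⟨-, a1, a2, a3⟩ := mem_un.1 h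
  · exact ⟨fun _ => (mem_HI.1 a2).2, fun _ => (mem_HI.1 a1).2⟩
  · exact ⟨fun h => (Finset.disjoint_left.1 hII h (mem_HI.1 a1).2).elim,
      fun h => (Finset.disjoint_left.1 hJJ h (mem_HI.1 a2).2).elim⟩

theorem mem_un_rs {A B : BD} (hA : A.Valid) (hB : B.Valid) {I J : Finset ℕ}
    {s : Finset (ℕ × ℕ)} (hs : BD.Matching A B s) {p : ℕ × ℕ} :
    p ∈ un A B I J (rs A B I J s) ↔ p ∈ s ∧ A.v p.1 ∈ I ∧ B.v p.2 ∈ J := by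
  rw [mem_un, mem_rs]
  constructor
  · rintro ⟨-, h1, h2, q, hq, hv, e⟩
    have e' := Prod.ext_iff.1 e
    have : q = p := Prod.ext (phi_inj (HfUp_HI hA (hs.1 q hq).1 hv.1) h1 e'.1)
      (phi_inj (HfDn_HI hB (hs.1 q hq).2 hv.2) h2 e'.2)
    subst this
    exact ⟨hq, hv⟩
  · rintro ⟨hp, hv⟩
    have h := hs.1 p hp
    exact ⟨h, HfUp_HI hA h.1 hv.1, HfDn_HI hB h.2 hv.2, p, hp, hv, rfl⟩

theorem un_rs {A B : BD} (hA : A.Valid) (hB : B.Valid) {I J : Finset ℕ}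
    {s : Finset (ℕ × ℕ)} (hs : BD.Matching A B s) (hg : Good A B I J s) :
    un A B I J (rs A B I J s) ∪ un A B (Finset.Icc 1 A.nv \ I) (Finset.Icc 1 B.nv \ J)
      (rs A B (Finset.Icc 1 A.nv \ I) (Finset.Icc 1 B.nv \ J) s) = s := by
  ext p
  rw [Finset.mem_union, mem_un_rs hA hB hs, mem_un_rs hA hB hs]
  constructor
  · rintro (h | h) <;> exact h.1
  · intro hp
    have h := hs.1 p hp
    have h1 := up_range hA (mem_HfUp.1 h.1).1
    have h2 := dn_range hB (mem_HfDn.1 h.2).1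
    have hgp := hg p hp
    simp only [Finset.mem_sdiff, Finset.mem_Icc]
    by_cases hv : A.v p.1 ∈ I
    · exact Or.inl ⟨hp, hv, hgp.1 hv⟩
    · exact Or.inr ⟨hp, ⟨⟨v_pos h1, v_le _ _⟩, hv⟩, ⟨⟨v_pos h2, v_le _ _⟩, fun h => hv (hgp.2 h)⟩⟩

theorem isolated_compl {G : BD} (h : G.Valid) {I : Finset ℕ} (hI : G.Isolated I) :
    G.Isolated (Finset.Icc 1 G.nv \ I) := by
  intro p hp
  obtain ⟨h1, h2, -⟩ := h.2.2.2.1 p hp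
  have h1 := v_pos (up_range h h1)
  have h2 := v_pos (dn_range h h2)
  simp only [Finset.mem_sdiff, Finset.mem_Icc, h1, h2, v_le, hI p hp]

def join (n : ℕ) (I J : Finset ℕ) : Finset ℕ := I ∪ J.image (· + n)

theorem split_join {n m : ℕ} {I J : Finset ℕ} (hI : I ⊆ Finset.Icc 1 n)
    (hJ : J ⊆ Finset.Icc 1 m) : Split n (join n I J) I J := by
  refine ⟨fun i h1 h2 => ?_, fun i h1 => ?_⟩ <;>
    simp only [join, Finset.mem_union, Finset.mem_image]
  · constructor
    · rintro (h | ⟨j, hj, rfl⟩)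
      · exact h
      · have := Finset.mem_Icc.1 (hJ hj); omega
    · exact Or.inl
  · constructor
    · rintro (h | ⟨j, hj, e⟩)
      · have := Finset.mem_Icc.1 (hI h); omega
      · obtain rfl : j = i := by omega
        exact hj
    · intro h; exact Or.inr ⟨i, h, rfl⟩

theorem split_compl {n m : ℕ} {K I J : Finset ℕ} (h : Split n K I J)
    (hJ : J ⊆ Finset.Icc 1 m) :
    Split n (Finset.Icc 1 (n + m) \ K) (Finset.Icc 1 n \ I) (Finset.Icc 1 m \ J) := by
  refine ⟨fun i h1 h2 => ?_, fun i h1 => ?_⟩ <;>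
    simp only [Finset.mem_sdiff, Finset.mem_Icc]
  · rw [h.1 i h1 h2]
    constructor <;> rintro ⟨_, h⟩ <;> exact ⟨by omega, h⟩
  · rw [h.2 i h1]
    constructor <;> rintro ⟨_, h⟩ <;> exact ⟨by omega, h⟩

theorem isolated_comp {A B : BD} (hA : A.Valid) (hB : B.Valid) {s : Finset (ℕ × ℕ)}
    (hs : BD.Matching A B s) {K I J : Finset ℕ} (hK : Split A.nv K I J) :
    (BD.comp A B s).Isolated K ↔ A.Isolated I ∧ B.Isolated J ∧ Good A B I J s := by
  have vl : ∀ k, 1 ≤ k ∧ k ≤ A.omega → ((BD.comp A B s).v k ∈ K ↔ A.v k ∈ I) := by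
    intro k h
    rw [v_comp_left h.2]; exact hK.1 _ (v_pos h) (v_le _ _)
  have vr : ∀ k, 1 ≤ k ∧ k ≤ B.omega → ((BD.comp A B s).v (k + A.omega) ∈ K ↔ B.v k ∈ J) := by
    intro k h
    rw [v_comp_right h.1]; exact hK.2 _ (v_pos h)
  have xA : ∀ p ∈ A.ed, _ := fun p hp =>
    iff_congr (vl _ (up_range hA (hA.2.2.2.1 p hp).1)) (vl _ (dn_range hA (hA.2.2.2.1 p hp).2.1))
  have xB : ∀ p ∈ B.ed, _ := fun p hp =>
    iff_congr (vr _ (up_range hB (hB.2.2.2.1 p hp).1)) (vr _ (dn_range hB (hB.2.2.2.1 p hp).2.1))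
  have xs : ∀ p ∈ s, _ := fun p hp =>
    iff_congr (vl _ (up_range hA (mem_HfUp.1 (hs.1 p hp).1).1))
      (vr _ (dn_range hB (mem_HfDn.1 (hs.1 p hp).2).1))
  constructor
  · intro h
    refine ⟨fun p hp => ?_, fun p hp => ?_, fun p hp => ?_⟩
    · exact (xA p hp).1 (h _ (mem_comp_ed.2 (Or.inl hp)))
    · exact (xB p hp).1 (h _ (mem_comp_ed.2 (Or.inr (Or.inr ⟨p, hp, rfl⟩))))
    · exact (xs p hp).1 (h _ (mem_comp_ed.2 (Or.inr (Or.inl ⟨p, hp, rfl⟩))))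
  · rintro ⟨h1, h2, h3⟩ x hx
    rcases mem_comp_ed.1 hx with h | ⟨p, hp, rfl⟩ | ⟨p, hp, rfl⟩
    · exact (xA x h).2 (h1 x h)
    · exact (xs p hp).2 (h3 p hp)
    · exact (xB p hp).2 (h2 p hp)

end BDP

namespace BDP

theorem liftB_single {V : Type*} [AddCommMonoid V] [Module ℂ V] (f : BDiagram → V) (A : BDiagram)
    (c : ℂ) : liftB f (Finsupp.single A c) = c • f A := by
  simp [liftB]

theorem mkB_valid {G : BD} (h : G.Valid) : mkB G = Finsupp.single ⟨G, h⟩ 1 := by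
  simp [mkB, h]

theorem liftB_mkB {V : Type*} [AddCommMonoid V] [Module ℂ V] (f : BDiagram → V) {G : BD}
    (h : G.Valid) : liftB f (mkB G) = f ⟨G, h⟩ := by
  rw [mkB_valid h, liftB_single, one_smul]

theorem starB_mkB {G H : BD} (hG : G.Valid) (hH : H.Valid) :
    starB (mkB G) (mkB H) = ∑ s ∈ BD.matchings G H, mkB (BD.comp G H s) := by
  unfold starB
  rw [liftB_mkB _ hG, liftB_mkB _ hH]; rfl

theorem star2_tmul (a b c d : BSpace) :
    star2 (a ⊗ₜ[ℂ] b) (c ⊗ₜ[ℂ] d) = starB a c ⊗ₜ[ℂ] starB b d := by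
  simp [star2, muB]

/-- bilinear version of star2 -/
noncomputable def star2L : BSpace ⊗[ℂ] BSpace →ₗ[ℂ] BSpace ⊗[ℂ] BSpace →ₗ[ℂ] BSpace ⊗[ℂ] BSpace :=
  (TensorProduct.mk ℂ (BSpace ⊗[ℂ] BSpace) (BSpace ⊗[ℂ] BSpace)).compr₂
    ((TensorProduct.map muB muB).comp
    (TensorProduct.tensorTensorTensorComm ℂ BSpace BSpace BSpace BSpace).toLinearMap)

theorem star2L_apply (x y : BSpace ⊗[ℂ] BSpace) : star2L x y = star2 x y := rfl

theorem nv_comp (A B : BD) (s : Finset (ℕ × ℕ)) : (BD.comp A B s).nv = A.nv + B.nv :=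
  List.length_append

theorem sum_powerset_join {M : Type*} [AddCommMonoid M] (n m : ℕ) (F : Finset ℕ → M) :
    ∑ K ∈ (Finset.Icc 1 (n + m)).powerset, F K =
      ∑ x ∈ (Finset.Icc 1 n).powerset ×ˢ (Finset.Icc 1 m).powerset, F (join n x.1 x.2) := by
  symm
  refine Finset.sum_nbij' (fun x => join n x.1 x.2)
    (fun K => (K ∩ Finset.Icc 1 n, shift n K)) ?_ ?_ ?_ ?_ ?_
  · intro x hx
    simp only [Finset.mem_product, Finset.mem_powerset] at hx
    rw [Finset.mem_powerset]
    intro i hi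
    simp only [join, Finset.mem_union, Finset.mem_image] at hi
    rw [Finset.mem_Icc]
    rcases hi with h | ⟨j, h, rfl⟩
    · have := Finset.mem_Icc.1 (hx.1 h); omega
    · have := Finset.mem_Icc.1 (hx.2 h); omega
  · intro K hK
    rw [Finset.mem_powerset] at hK
    simp only [Finset.mem_product, Finset.mem_powerset]
    refine ⟨Finset.inter_subset_right, ?_⟩
    intro i hi
    simp only [shift, Finset.mem_image, Finset.mem_filter] at hi
    obtain ⟨a, ⟨h1, h2⟩, rfl⟩ := hi
    have := Finset.mem_Icc.1 (hK h1)
    rw [Finset.mem_Icc]; omega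
  · rintro ⟨I, J⟩ hx
    simp only [Finset.mem_product, Finset.mem_powerset] at hx
    have hs := split_join hx.1 hx.2
    refine Prod.ext ?_ ?_
    · ext i
      simp only [Finset.mem_inter, Finset.mem_Icc]
      constructor
      · rintro ⟨h, h1, h2⟩; exact (hs.1 i h1 h2).1 h
      · intro h
        have := Finset.mem_Icc.1 (hx.1 h)
        exact ⟨(hs.1 i this.1 this.2).2 h, this⟩
    · ext i
      dsimp only
      by_cases hi : 1 ≤ i
      · rw [← (split_shift n _).2 i hi, hs.2 i hi]
      · constructor
        · intro h
          simp only [shift, Finset.mem_image, Finset.mem_filter] at h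
          obtain ⟨a, ⟨h1, h2⟩, rfl⟩ := h
          omega
        · intro h
          have := Finset.mem_Icc.1 (hx.2 h)
          omega
  · intro K hK
    rw [Finset.mem_powerset] at hK
    ext i
    simp only [join, Finset.mem_union, Finset.mem_image, Finset.mem_inter, Finset.mem_Icc, shift,
      Finset.mem_filter]
    constructor
    · rintro (h | ⟨a, ⟨b, ⟨h1, h2⟩, rfl⟩, rfl⟩)
      · exact h.1
      · rwa [Nat.sub_add_cancel h2.le]
    · intro h
      have := Finset.mem_Icc.1 (hK h)
      by_cases hi : i ≤ n
      · exact Or.inl ⟨h, this.1, hi⟩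
      · exact Or.inr ⟨i - n, ⟨i, ⟨h, by omega⟩, rfl⟩, by omega⟩
  · intro x _; rfl

open scoped Classical in
theorem inner_sum {A B : BD} (hA : A.Valid) (hB : B.Valid) {I J : Finset ℕ}
    (hI : A.Isolated I) (hJ : B.Isolated J) {M : Type*} [AddCommMonoid M]
    (F : Finset (ℕ × ℕ) → Finset (ℕ × ℕ) → M) :
    ∑ s ∈ (BD.matchings A B).filter (Good A B I J),
        F (rs A B I J s) (rs A B (Finset.Icc 1 A.nv \ I) (Finset.Icc 1 B.nv \ J) s) =
      ∑ x ∈ BD.matchings (A.sub I) (B.sub J) ×ˢ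
        BD.matchings (A.sub (Finset.Icc 1 A.nv \ I)) (B.sub (Finset.Icc 1 B.nv \ J)),
        F x.1 x.2 := by
  have hI' := isolated_compl hA hI
  have hJ' := isolated_compl hB hJ
  have dI : Disjoint I (Finset.Icc 1 A.nv \ I) := Finset.disjoint_sdiff
  have dJ : Disjoint J (Finset.Icc 1 B.nv \ J) := Finset.disjoint_sdiff
  refine Finset.sum_nbij'
    (fun s => (rs A B I J s, rs A B (Finset.Icc 1 A.nv \ I) (Finset.Icc 1 B.nv \ J) s))
    (fun x => un A B I J x.1 ∪ un A B (Finset.Icc 1 A.nv \ I) (Finset.Icc 1 B.nv \ J) x.2)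
    ?_ ?_ ?_ ?_ ?_
  · intro s hs
    rw [Finset.mem_filter, mem_matchings] at hs
    rw [Finset.mem_product, mem_matchings, mem_matchings]
    exact ⟨rs_matching hA hB hI hJ hs.1, rs_matching hA hB hI' hJ' hs.1⟩
  · intro x hx
    rw [Finset.mem_product, mem_matchings, mem_matchings] at hx
    rw [Finset.mem_filter, mem_matchings]
    exact ⟨un_matching dI dJ hx.1 hx.2, un_good dI dJ⟩
  · intro s hs
    rw [Finset.mem_filter, mem_matchings] at hs
    exact un_rs hA hB hs.1 hs.2
  · intro x hx
    rw [Finset.mem_product, mem_matchings, mem_matchings] at hx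
    refine Prod.ext (rs_un hA hB hI hJ dI hx.1) ?_
    dsimp only
    rw [Finset.union_comm]
    exact rs_un hA hB hI' hJ' dI.symm hx.2
  · intro s _; rfl

theorem delta_basis (A B : BDiagram) :
    deltaL (mulfun A B) = star2 (dfun A) (dfun B) := by
  classical
  obtain ⟨A, hA⟩ := A
  obtain ⟨B, hB⟩ := B
  have hL : deltaL (mulfun ⟨A, hA⟩ ⟨B, hB⟩) = ∑ s ∈ BD.matchings A B,
      ∑ x ∈ (Finset.Icc 1 A.nv).powerset ×ˢ (Finset.Icc 1 B.nv).powerset,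
        if A.Isolated x.1 ∧ B.Isolated x.2 ∧ Good A B x.1 x.2 s then
          mkB (BD.comp (A.sub x.1) (B.sub x.2) (rs A B x.1 x.2 s)) ⊗ₜ[ℂ]
          mkB (BD.comp (A.sub (Finset.Icc 1 A.nv \ x.1)) (B.sub (Finset.Icc 1 B.nv \ x.2))
            (rs A B (Finset.Icc 1 A.nv \ x.1) (Finset.Icc 1 B.nv \ x.2) s)) else 0 := by
    unfold mulfun
    rw [map_sum]
    apply Finset.sum_congr rfl
    intro s hs
    have hs := mem_matchings.1 hs
    unfold deltaL
    rw [liftB_mkB _ (comp_valid hA hB hs)]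
    unfold dfun
    dsimp only
    rw [Finset.sum_filter, nv_comp, sum_powerset_join]
    apply Finset.sum_congr rfl
    intro x hx
    simp only [Finset.mem_product, Finset.mem_powerset] at hx
    have hsp := split_join hx.1 hx.2
    rw [sub_comp hA hB hs hsp, sub_comp hA hB hs (split_compl hsp hx.2)]
    exact if_congr (isolated_comp hA hB hs hsp) rfl rfl
  have hR : star2 (dfun ⟨A, hA⟩) (dfun ⟨B, hB⟩) =
      ∑ x ∈ (Finset.Icc 1 A.nv).powerset ×ˢ (Finset.Icc 1 B.nv).powerset,
        if A.Isolated x.1 ∧ B.Isolated x.2 then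
          ∑ y ∈ BD.matchings (A.sub x.1) (B.sub x.2) ×ˢ
            BD.matchings (A.sub (Finset.Icc 1 A.nv \ x.1)) (B.sub (Finset.Icc 1 B.nv \ x.2)),
          mkB (BD.comp (A.sub x.1) (B.sub x.2) y.1) ⊗ₜ[ℂ]
          mkB (BD.comp (A.sub (Finset.Icc 1 A.nv \ x.1)) (B.sub (Finset.Icc 1 B.nv \ x.2))
            y.2) else 0 := by
    rw [← star2L_apply]
    unfold dfun
    simp only [map_sum, LinearMap.sum_apply, star2L_apply, star2_tmul]
    rw [Finset.sum_comm, ← Finset.sum_filter, ← Finset.sum_product']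
    apply Finset.sum_congr
    · ext x
      simp only [Finset.mem_product, Finset.mem_filter]
      tauto
    · intro x hx
      rw [starB_mkB (sub_valid hA _) (sub_valid hB _), starB_mkB (sub_valid hA _) (sub_valid hB _),
        TensorProduct.sum_tmul, Finset.sum_product]
      simp only [TensorProduct.tmul_sum]
  rw [hL, hR, Finset.sum_comm]
  apply Finset.sum_congr rfl
  intro x hx
  by_cases h : A.Isolated x.1 ∧ B.Isolated x.2
  · rw [if_pos h, ← inner_sum hA hB h.1 h.2 (fun a b =>
      mkB (BD.comp (A.sub x.1) (B.sub x.2) a) ⊗ₜ[ℂ]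
          mkB (BD.comp (A.sub (Finset.Icc 1 A.nv \ x.1)) (B.sub (Finset.Icc 1 B.nv \ x.2)) b)),
      Finset.sum_filter]
    apply Finset.sum_congr rfl
    intro s _
    exact if_congr ⟨fun k => k.2.2, fun k => ⟨h.1, h.2, k⟩⟩ rfl rfl
  · rw [if_neg h]
    apply Finset.sum_eq_zero
    intro s _
    rw [if_neg]
    tauto

theorem eq_eps {A : BD} (h : A.Valid) (hl : A.lam = []) : A = BD.eps := by
  have h0 : A.omega = 0 := by simp [BD.omega, hl]
  obtain ⟨-, h1, h2, h3, -, -⟩ := h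
  rw [h0] at h1 h2
  have h1 : A.up = ∅ := by simpa using h1
  have h2 : A.dn = ∅ := by simpa using h2
  have h3 : A.ed = ∅ := by
    rw [Finset.eq_empty_iff_forall_notMem]
    intro p hp
    have := (h3 p hp).1
    rw [h1] at this
    simp at this
  cases A
  simp only at hl h1 h2 h3
  simp [BD.eps, hl, h1, h2, h3]

theorem counit_basis (A B : BDiagram) : counitB (mulfun A B) =
    (if A.1 = BD.eps then (1 : ℂ) else 0) * (if B.1 = BD.eps then (1 : ℂ) else 0) := by
  obtain ⟨A, hA⟩ := A
  obtain ⟨B, hB⟩ := B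
  unfold mulfun
  rw [map_sum]
  dsimp only
  have h1 : ∀ s ∈ BD.matchings A B, counitB (mkB (BD.comp A B s)) =
      if BD.comp A B s = BD.eps then (1 : ℂ) else 0 := by
    intro s hs
    unfold counitB
    rw [liftB_mkB _ (comp_valid hA hB (mem_matchings.1 hs))]
  rw [Finset.sum_congr rfl h1]
  by_cases h : A = BD.eps ∧ B = BD.eps
  · obtain ⟨rfl, rfl⟩ := h
    have : BD.matchings BD.eps BD.eps = {∅} := by
      ext s
      rw [mem_matchings, Finset.mem_singleton]
      constructor
      · intro h
        rw [Finset.eq_empty_iff_forall_notMem]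
        intro p hp
        have := (h.1 p hp).1
        simp [BD.HfUp, BD.eps] at this
      · rintro rfl
        simp [BD.Matching]
    rw [this, Finset.sum_singleton]
    simp [BD.comp, BD.eps]
  · have h2 : ∀ s, BD.comp A B s ≠ BD.eps := by
      intro s e
      have e1 : A.lam ++ B.lam = [] := congrArg BD.lam e
      rw [List.append_eq_nil_iff] at e1
      exact h ⟨eq_eps hA e1.1, eq_eps hB e1.2⟩
    rw [Finset.sum_eq_zero (fun s _ => if_neg (h2 s))]
    rcases not_and_or.1 h with h | h <;> simp [h]

theorem starB_single (A B : BDiagram) :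
    starB (Finsupp.single A 1) (Finsupp.single B 1) = mulfun A B := by
  unfold starB
  rw [liftB_single, one_smul, liftB_single, one_smul]

theorem bilin_ext {V : Type*} [AddCommMonoid V] [Module ℂ V] (f g : BSpace →ₗ[ℂ] BSpace →ₗ[ℂ] V)
    (h : ∀ A B, f (Finsupp.single A 1) (Finsupp.single B 1) =
      g (Finsupp.single A 1) (Finsupp.single B 1)) : f = g := by
  apply Finsupp.lhom_ext'
  intro A
  apply LinearMap.ext_ring
  apply Finsupp.lhom_ext'
  intro B
  apply LinearMap.ext_ring
  exact h A B

end BDP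

/-- `Δ` and `ε*` are morphisms of algebras, where ℬ ⊗ ℬ carries the
componentwise product. -/
theorem deltaL_multiplicative :
    (∀ u v : BSpace, deltaL (starB u v) = star2 (deltaL u) (deltaL v)) ∧
    (∀ u v : BSpace, counitB (starB u v) = counitB u * counitB v) := by
  constructor
  · intro u v
    have h : starB.compr₂ deltaL = BDP.star2L.compl₁₂ deltaL deltaL := by
      apply BDP.bilin_ext
      intro A B
      rw [LinearMap.compr₂_apply, LinearMap.compl₁₂_apply, BDP.starB_single, BDP.delta_basis,
        BDP.star2L_apply]
      unfold deltaL
      rw [BDP.liftB_single, BDP.liftB_single, one_smul, one_smul]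
    exact LinearMap.congr_fun (LinearMap.congr_fun h u) v
  · intro u v
    have h : starB.compr₂ counitB = (LinearMap.mul ℂ ℂ).compl₁₂ counitB counitB := by
      apply BDP.bilin_ext
      intro A B
      rw [LinearMap.compr₂_apply, LinearMap.compl₁₂_apply, BDP.starB_single, BDP.counit_basis,
        LinearMap.mul_apply']
      unfold counitB
      rw [BDP.liftB_single, BDP.liftB_single, one_smul, one_smul]
    exact LinearMap.congr_fun (LinearMap.congr_fun h u) v
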